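/- (Klein–Hurwitz) The function y(τ) = η(τ)^{−2} solves the modular linear differential equation y''(τ) + (π²/36) E4(τ) y(τ) = 0 for all τ in the upper half-plane. -/

import Mathlib

open Complex Filter Topology

noncomputable section

/-- The nome `q = e^{2πiτ}`. -/
def qq (τ : ℂ) : ℂ := Complex.exp (2 * Real.pi * Complex.I * τ)

/-- The Eisenstein series `E₄(τ) = 1 + 240 Σ_{n≥1} σ₃(n) qⁿ`. -/
def E4 (τ : ℂ) : ℂ := 1 + 240 * ∑' n : ℕ, (∑ d ∈ (n + 1).divisors, (d : ℂ) ^ 3) * qq τ ^ (n + 1)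

/-- The Eisenstein series `E₆(τ) = 1 − 504 Σ_{n≥1} σ₅(n) qⁿ`. -/
def E6 (τ : ℂ) : ℂ := 1 - 504 * ∑' n : ℕ, (∑ d ∈ (n + 1).divisors, (d : ℂ) ^ 5) * qq τ ^ (n + 1)

/-- The normalized elliptic modular function `J = E₄³ / (E₄³ − E₆²)`. -/
def J (τ : ℂ) : ℂ := E4 τ ^ 3 / (E4 τ ^ 3 - E6 τ ^ 2)

/-- The Dedekind eta function `η(τ) = e^{πiτ/12} ∏_{n≥1} (1 − qⁿ)`. -/
def dedekindEta (τ : ℂ) : ℂ := Complex.exp (Real.pi * Complex.I * τ / 12) * ∏' n : ℕ, (1 - qq τ ^ (n + 1))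

/-- The elliptic point `ρ = e^{2πi/3}`. -/
def rho : ℂ := Complex.exp (2 * Real.pi * Complex.I / 3)

/-!
Let `D = (2πi)⁻¹ d/dτ`. The transformation law of `E₂` makes `D E₂ - E₂² / 12` a modular form of
weight `4`, since the two defects of modularity cancel. Its value at `i∞` is `-1 / 12` and there are
no cusp forms of weight `4`, so it equals `-E₄ / 12` (Ramanujan). As `η` has logarithmic derivative
`D η / η = E₂ / 24`, it follows that `D² ηⁿ = (n (n + 2) / 576 · E₂² - n / 288 · E₄) ηⁿ`, and the
`E₂²` term disappears for `n = -2`.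
-/

open scoped MatrixGroups ModularForm Manifold Derivative
open UpperHalfPlane hiding I
open Derivative Function.Periodic

section NormalizedDeriv

lemma normalizedDerivOfComplex_comp_coe (f : ℂ → ℂ) (z : ℍ) :
    D (fun w : ℍ ↦ f w) z = (2 * Real.pi * I)⁻¹ * deriv f z := by
  have hf : (fun w : ℍ ↦ f w) ∘ ofComplex =ᶠ[𝓝 (z : ℂ)] f := by
    filter_upwards [isOpen_upperHalfPlaneSet.mem_nhds z.im_pos] with w hw
    rw [Function.comp_apply, ofComplex_apply_of_im_pos hw]
  rw [normalizedDerivOfComplex, hf.deriv_eq]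

lemma iteratedDeriv_eq_iterate_normalizedDerivOfComplex (n : ℕ) (f : ℂ → ℂ) (z : ℍ) :
    iteratedDeriv n f z = (2 * Real.pi * I) ^ n * (D^[n] fun w : ℍ ↦ f w) z := by
  induction n generalizing f with
  | zero => simp
  | succ n ih =>
    have hD : D (fun w : ℍ ↦ f w) = fun w : ℍ ↦ (2 * Real.pi * I)⁻¹ * deriv f w :=
      funext (normalizedDerivOfComplex_comp_coe f)
    have hderiv := ih fun w ↦ (2 * Real.pi * I)⁻¹ * deriv f w
    rw [iteratedDeriv_const_mul_field, inv_mul_eq_iff_eq_mul₀ two_pi_I_ne_zero] at hderiv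
    rw [iteratedDeriv_succ', Function.iterate_succ_apply, hD, hderiv, pow_succ']
    ring

end NormalizedDeriv

section AtImInfty

lemma tendsto_atImInfty_of_hasSum_qExpansion {h : ℝ} (hh : 0 < h) {f : ℍ → ℂ} {c : ℕ → ℂ}
    (hf : ∀ τ : ℍ, HasSum (fun m ↦ c m • qParam h τ ^ m) (f τ)) :
    Tendsto f atImInfty (𝓝 (c 0)) := by
  have hq (τ : ℍ) : qParam h τ ≠ 0 := qParam_ne_zero _
  have hbdd : IsBoundedAtImInfty fun τ : ℍ ↦ (f τ - c 0) / qParam h τ := by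
    refine isBoundedAtImInfty_of_hasSum_qExpansion hh (c := fun m ↦ c (m + 1)) fun τ ↦ ?_
    have htail := ((hasSum_nat_add_iff' 1).mpr (hf τ)).div_const (qParam h τ)
    simpa only [smul_eq_mul, pow_succ, ← mul_assoc, mul_div_cancel_right₀ _ (hq τ),
      Finset.sum_range_one, pow_zero, mul_one] using htail
  have hzero := ZeroAtFilter.mul_boundedAtFilter (qParam_tendsto_atImInfty hh) hbdd
  refine ((Tendsto.add_const (c 0) hzero).congr fun τ ↦ ?_).trans_eq (by rw [zero_add])
  rw [Pi.mul_apply, mul_div_cancel₀ _ (hq τ), sub_add_cancel]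

lemma norm_normalizedDerivOfComplex_le {f : ℍ → ℂ} (hf : MDiff f) {M r : ℝ} (hr : 0 < r) {z : ℍ}
    (hrz : r < z.im) (hM : ∀ w : ℍ, dist (w : ℂ) z = r → ‖f w‖ ≤ M) :
    ‖D f z‖ ≤ ‖(2 * Real.pi * I : ℂ)⁻¹‖ * (M / r) := by
  have hball : Metric.closedBall (z : ℂ) r ⊆ upperHalfPlaneSet := fun w hw ↦ by
    have him := (Complex.abs_im_le_norm (w - z)).trans (mem_closedBall_iff_norm.mp hw)
    rw [Complex.sub_im, UpperHalfPlane.coe_im] at him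
    exact (by linarith [neg_le_of_abs_le him] : 0 < w.im)
  rw [normalizedDerivOfComplex, norm_mul]
  gcongr
  refine Complex.norm_deriv_le_of_forall_mem_sphere_norm_le hr
    (((UpperHalfPlane.mdifferentiable_iff.mp hf).mono hball).diffContOnCl_ball subset_rfl)
    fun w hw ↦ ?_
  rw [Function.comp_apply, ofComplex_apply_of_im_pos (hball (Metric.sphere_subset_closedBall hw))]
  exact hM _ hw

lemma isZeroAtImInfty_normalizedDerivOfComplex {f : ℍ → ℂ} (hf : MDiff f)
    (hb : IsBoundedAtImInfty f) : IsZeroAtImInfty (D f) := by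
  obtain ⟨M, A, hM⟩ := isBoundedAtImInfty_iff.mp hb
  have hbound : ∀ᶠ z in atImInfty, ‖D f z‖ ≤ ‖(2 * Real.pi * I : ℂ)⁻¹‖ * (M / (z.im / 2)) := by
    filter_upwards [(tendsto_comap (f := UpperHalfPlane.im)).eventually_ge_atTop (2 * A)] with z hz
    refine norm_normalizedDerivOfComplex_le hf (half_pos z.im_pos) (half_lt_self z.im_pos)
      fun w hw ↦ hM w ?_
    have him := (Complex.abs_im_le_norm (w - z)).trans_eq ((dist_eq_norm _ _).symm.trans hw)
    rw [Complex.sub_im, UpperHalfPlane.coe_im, UpperHalfPlane.coe_im] at him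
    linarith [neg_le_of_abs_le him]
  have him : Tendsto (fun z : ℍ ↦ M / (z.im / 2)) atImInfty (𝓝 0) :=
    (tendsto_comap.atTop_div_const two_pos).const_div_atTop M
  refine squeeze_zero_norm' hbound ?_
  simpa only [mul_zero] using him.const_mul ‖(2 * Real.pi * I : ℂ)⁻¹‖

lemma eq_zero_of_isZeroAtImInfty {k : ℤ} (hk : k < 12) {f : ModularForm 𝒮ℒ k}
    (hf : IsZeroAtImInfty f) : f = 0 := by
  have hcoeff : (qExpansion 1 f).coeff 0 = 0 := by
    rw [UpperHalfPlane.qExpansion_coeff_zero one_pos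
      (ModularFormClass.analyticAt_cuspFunction_zero f one_pos one_mem_strictPeriods_SL)
      (SlashInvariantFormClass.periodic_comp_ofComplex f one_mem_strictPeriods_SL)]
    exact hf.valueAtInfty_eq_zero
  have hcusp : ModularForm.toCuspForm f hcoeff = 0 :=
    rank_zero_iff_forall_zero.mp (CuspForm.rank_eq_zero_of_weight_lt_twelve hk) _
  ext z
  exact DFunLike.congr_fun hcusp z

lemma eq_of_tendsto_atImInfty {k : ℤ} (hk : k < 12) {f g : ModularForm 𝒮ℒ k} {c : ℂ}
    (hf : Tendsto f atImInfty (𝓝 c)) (hg : Tendsto g atImInfty (𝓝 c)) : f = g :=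
  sub_eq_zero.mp (eq_zero_of_isZeroAtImInfty hk ((hf.sub hg).trans_eq (by rw [sub_self])))

end AtImInfty

section Ramanujan

/-- The defect `E₂ - E₂ ∣[2] γ = (6i / π) c / (cz + d)` of modularity of `E₂`, where `(c, d)` is
the bottom row of `γ`. -/
def E2Defect (γ : SL(2, ℤ)) : ℍ → ℂ := (1 / (2 * riemannZeta 2)) • EisensteinSeries.D2 γ

lemma E2_slash (γ : SL(2, ℤ)) :
    EisensteinSeries.E2 ∣[(2 : ℤ)] γ = EisensteinSeries.E2 - E2Defect γ :=
  EisensteinSeries.E2_slash_action γ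

lemma E2Defect_apply (γ : SL(2, ℤ)) (z : ℍ) :
    E2Defect γ z = 6 * I / Real.pi * γ 1 0 * (denom γ z)⁻¹ := by
  simp only [E2Defect, EisensteinSeries.D2, Pi.smul_apply, smul_eq_mul, riemannZeta_two]
  field_simp

lemma mdifferentiable_E2Defect (γ : SL(2, ℤ)) : MDiff (E2Defect γ) := by
  rw [funext (E2Defect_apply γ)]
  exact mdifferentiable_const.mul (mdifferentiable_inv_denom _)

lemma normalizedDerivOfComplex_E2Defect (γ : SL(2, ℤ)) :
    D (E2Defect γ) = (1 / 12 : ℂ) • E2Defect γ ^ 2 := by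
  ext z
  have hderiv : deriv (fun w ↦ (denom γ w)⁻¹) z = -γ 1 0 / denom γ z ^ 2 := by
    simpa [div_eq_mul_inv, zpow_neg] using (hasDerivAt_denom_zpow (γ : GL (Fin 2) ℝ) (-1) z).deriv
  rw [funext (E2Defect_apply γ),
    normalizedDerivOfComplex_comp_coe fun w ↦ 6 * I / Real.pi * γ 1 0 * (denom γ w)⁻¹,
    deriv_const_mul_field, hderiv]
  simp only [Pi.smul_apply, Pi.pow_apply, smul_eq_mul]
  field_simp
  linear_combination -12 * (γ 1 0 : ℂ) ^ 2 * I_sq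

lemma serreDerivative_one_E2_slash (γ : SL(2, ℤ)) :
    serreDerivative 1 EisensteinSeries.E2 ∣[(4 : ℤ)] γ = serreDerivative 1 EisensteinSeries.E2 := by
  have hsplit : serreDerivative 1 EisensteinSeries.E2 =
      serreDerivative (2 : ℤ) EisensteinSeries.E2 +
        (1 / 12 : ℂ) • (EisensteinSeries.E2 * EisensteinSeries.E2) := by
    ext z
    simp only [serreDerivative_apply, Int.cast_ofNat, Pi.add_apply, Pi.smul_apply, Pi.mul_apply,
      smul_eq_mul]
    ring
  have hsq : (EisensteinSeries.E2 * EisensteinSeries.E2) ∣[(4 : ℤ)] γ =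
      (EisensteinSeries.E2 - E2Defect γ) * (EisensteinSeries.E2 - E2Defect γ) := by
    rw [← E2_slash]
    exact ModularForm.mul_slash_SL2 2 2 γ _ _
  have hserre : serreDerivative (2 : ℤ) EisensteinSeries.E2 ∣[(4 : ℤ)] γ =
      serreDerivative (2 : ℤ) (EisensteinSeries.E2 - E2Defect γ) := by
    rw [← E2_slash]
    exact serreDerivative_slash_equivariant E2_mdifferentiable
  rw [hsplit, SlashAction.add_slash, ModularForm.SL_smul_slash, hserre, hsq]
  ext z
  simp only [serreDerivative_apply, Int.cast_ofNat, Pi.add_apply, Pi.sub_apply, Pi.smul_apply,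
    Pi.mul_apply, Pi.pow_apply, smul_eq_mul, normalizedDerivOfComplex_E2Defect,
    normalizedDerivOfComplex_sub _ _ E2_mdifferentiable (mdifferentiable_E2Defect γ)]
  ring

lemma tendsto_E2_atImInfty : Tendsto EisensteinSeries.E2 atImInfty (𝓝 1) :=
  tendsto_atImInfty_of_hasSum_qExpansion one_pos
    (c := fun m ↦ if m = 0 then 1 else -24 * ArithmeticFunction.sigma 1 m) fun τ ↦ by
    simpa only [qParam, ofReal_one, div_one] using EisensteinSeries.hasSum_qExpansion_E2 (z := τ)

lemma tendsto_E₄_atImInfty : Tendsto ModularForm.E₄ atImInfty (𝓝 1) := by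
  have h := tendsto_atImInfty_of_hasSum_qExpansion one_pos fun τ ↦
    ModularForm.hasSum_qExpansion ModularForm.E₄ one_pos one_mem_strictPeriods_SL τ
  rwa [EisensteinSeries.E_qExpansion_coeff_zero _ ⟨2, rfl⟩] at h

lemma tendsto_serreDerivative_E2_atImInfty (k : ℂ) :
    Tendsto (serreDerivative k EisensteinSeries.E2) atImInfty (𝓝 (-(k / 12))) := by
  have hD := isZeroAtImInfty_normalizedDerivOfComplex E2_mdifferentiable
    EisensteinSeries.isBoundedAtImInfty_E2
  simpa [div_eq_mul_inv] using
    Tendsto.sub hD ((tendsto_E2_atImInfty.const_mul (k * 12⁻¹)).mul tendsto_E2_atImInfty)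

/-- The Serre derivative `D E₂ - E₂² / 12` as a modular form of level one; the weight parameter is
`1`, not the weight `2` of `E₂`, because `E₂` is only quasimodular. -/
def serreDerivativeE2 : ModularForm 𝒮ℒ 4 where
  toFun := serreDerivative 1 EisensteinSeries.E2
  slash_action_eq' := fun _ ⟨γ, hγ⟩ ↦ hγ ▸ serreDerivative_one_E2_slash γ
  holo' := serreDerivative_mdifferentiable 1 E2_mdifferentiable
  bdd_at_cusps' hc := (OnePoint.isBoundedAt_iff_forall_SL2Z hc).mpr fun γ _ ↦ by
    rw [serreDerivative_one_E2_slash]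
    exact (tendsto_serreDerivative_E2_atImInfty 1).isBigO_one ℝ

theorem serreDerivative_one_E2 :
    serreDerivative 1 EisensteinSeries.E2 = (-(1 / 12) : ℂ) • ⇑ModularForm.E₄ := by
  have hE₄ : Tendsto ((-(1 / 12) : ℂ) • ModularForm.E₄ : ModularForm 𝒮ℒ 4) atImInfty
      (𝓝 (-(1 / 12))) := by
    simpa only [mul_one] using! tendsto_E₄_atImInfty.const_mul (-(1 / 12) : ℂ)
  exact congrArg DFunLike.coe (eq_of_tendsto_atImInfty (f := serreDerivativeE2) (by norm_num)
    (tendsto_serreDerivative_E2_atImInfty 1) hE₄)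

end Ramanujan

section Eta

lemma mdifferentiable_eta_zpow (n : ℤ) : MDiff fun z : ℍ ↦ ModularForm.eta z ^ n := fun z ↦ by
  have hη : DifferentiableAt ℂ (fun w ↦ ModularForm.eta w ^ n) z :=
    (ModularForm.differentiableAt_eta_of_mem_upperHalfPlaneSet z.im_pos).zpow
      (Or.inl (ModularForm.eta_ne_zero z.im_pos))
  exact hη.mdifferentiableAt.comp z (mdifferentiable_coe z)

lemma normalizedDerivOfComplex_eta_zpow (n : ℤ) :
    D (fun z : ℍ ↦ ModularForm.eta z ^ n) =
      (n / 24 : ℂ) • (EisensteinSeries.E2 * fun z : ℍ ↦ ModularForm.eta z ^ n) := by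
  ext z
  have hη : ModularForm.eta z ≠ 0 := ModularForm.eta_ne_zero z.im_pos
  have hlog : logDeriv (fun w ↦ ModularForm.eta w ^ n) z =
      n * (Real.pi * I / 12 * EisensteinSeries.E2 z) := by
    rw [logDeriv_fun_zpow (ModularForm.differentiableAt_eta_of_mem_upperHalfPlaneSet z.im_pos),
      ModularForm.logDeriv_eta_eq_E2]
  rw [logDeriv_apply, div_eq_iff (zpow_ne_zero n hη)] at hlog
  rw [normalizedDerivOfComplex_comp_coe fun w ↦ ModularForm.eta w ^ n, hlog]
  simp only [Pi.smul_apply, Pi.mul_apply, smul_eq_mul]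
  field

lemma iterate_two_normalizedDerivOfComplex_eta_zpow (n : ℤ) (z : ℍ) :
    (D^[2] fun w : ℍ ↦ ModularForm.eta w ^ n) z =
      (n * (n + 2) / 576 * EisensteinSeries.E2 z ^ 2 - n / 288 * ModularForm.E₄ z) *
        ModularForm.eta z ^ n := by
  have hE2 := congrFun serreDerivative_one_E2 z
  have hη := mdifferentiable_eta_zpow n
  rw [Function.iterate_succ_apply, Function.iterate_one, normalizedDerivOfComplex_eta_zpow,
    normalizedDerivOfComplex_smul _ _ (E2_mdifferentiable.mul hη),
    normalizedDerivOfComplex_mul _ _ E2_mdifferentiable hη, normalizedDerivOfComplex_eta_zpow]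
  simp only [Pi.smul_apply, Pi.add_apply, Pi.mul_apply, smul_eq_mul, serreDerivative_apply] at hE2 ⊢
  linear_combination (n / 24 * ModularForm.eta z ^ n : ℂ) * hE2

theorem iteratedDeriv_two_eta_zpow (n : ℤ) (z : ℍ) :
    iteratedDeriv 2 (fun w : ℂ ↦ ModularForm.eta w ^ n) z =
      Real.pi ^ 2 / 144 * (2 * n * ModularForm.E₄ z - n * (n + 2) * EisensteinSeries.E2 z ^ 2) *
        ModularForm.eta z ^ n := by
  rw [iteratedDeriv_eq_iterate_normalizedDerivOfComplex,
    iterate_two_normalizedDerivOfComplex_eta_zpow, mul_pow, I_sq]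
  ring

end Eta

lemma E4_coe (z : ℍ) : E4 z = ModularForm.E₄ z := by
  have hcoeff : 2 * (4 : ℕ) / (bernoulli 4 : ℂ) = -240 := by
    rw [bernoulli_eq_bernoulli'_of_ne_one (by norm_num), bernoulli'_four]
    norm_num
  rw [ModularForm.E₄, EisensteinSeries.q_expansion_bernoulli (by norm_num) ⟨2, rfl⟩ z, hcoeff,
    tsum_pnat_eq_tsum_succ (f := fun n : ℕ ↦
      (ArithmeticFunction.sigma 3 n : ℂ) * cexp (2 * Real.pi * I * z) ^ (n : ℤ)), E4]
  simp only [ArithmeticFunction.sigma_apply, qq, zpow_natCast, Nat.cast_sum, Nat.cast_pow]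
  ring

lemma dedekindEta_eq_eta : dedekindEta = ModularForm.eta := by
  ext z
  simp only [dedekindEta, ModularForm.eta, qq, ModularForm.eta_q_eq_pow]
  congr 2
  push_cast
  ring

/-- Klein–Hurwitz: `y = η⁻²` solves `y'' + (π²/36) E₄ y = 0` on the upper half-plane. -/
theorem klein_hurwitz (τ : ℂ) (hτ : 0 < τ.im) :
    iteratedDeriv 2 (fun z : ℂ => (dedekindEta z) ^ (-2 : ℤ)) τ +
      (Real.pi : ℂ) ^ 2 / 36 * E4 τ * (dedekindEta τ) ^ (-2 : ℤ) = 0 := by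
  lift τ to ℍ using hτ
  rw [dedekindEta_eq_eta, E4_coe, iteratedDeriv_two_eta_zpow]
  push_cast
  ring
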